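/- (Identity (4.1), stated with q replaced by q^2 to avoid half-integer powers.) Let q be a complex number with 0 < |q| < 1 and let k ≥ 2 be an integer. Then ∑_{s_1 ≥ s_2 ≥ ⋯ ≥ s_{k-1} ≥ 0} q^{2(s_1^2 + ⋯ + s_{k-1}^2)} / [(q^2;q^2)_{s_1-s_2} ⋯ (q^2;q^2)_{s_{k-2}-s_{k-1}} (q;q)_{2 s_{k-1}}] = (q^{4k}, -q^{2k-1}, -q^{2k+1}; q^{4k})_∞ / (q^2;q^2)_∞. -/

import Mathlib

/-- The finite q-Pochhammer symbol `(x;q)_n = ∏_{j=0}^{n-1} (1 - x q^j)`. -/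
noncomputable def qPoch (x q : ℂ) (n : ℕ) : ℂ := ∏ j ∈ Finset.range n, (1 - x * q ^ j)

/-- The infinite q-Pochhammer symbol `(x;q)_∞ = ∏_{j=0}^{∞} (1 - x q^j)`. -/
noncomputable def qPochInf (x q : ℂ) : ℂ := ∏' j : ℕ, (1 - x * q ^ j)

/-- The reciprocal `1/(Q;Q)_n`, extended by zero to negative integers. -/
noncomputable def eQ (Q : ℂ) (n : ℤ) : ℂ := if n < 0 then 0 else (qPoch Q Q n.toNat)⁻¹

lemma eQ_neg (Q : ℂ) {n : ℤ} (h : n < 0) : eQ Q n = 0 := by simp [eQ, h]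

lemma eQ_nat (Q : ℂ) (n : ℕ) : eQ Q n = (qPoch Q Q n)⁻¹ := by simp [eQ]

lemma one_sub_pow_ne {Q : ℂ} (h1 : ‖Q‖ < 1) (n : ℕ) : 1 - Q ^ (n + 1) ≠ 0 := by
  intro h
  have h2 : Q ^ (n + 1) = 1 := (sub_eq_zero.mp h).symm
  have h3 : ‖Q‖ ^ (n + 1) < 1 := pow_lt_one₀ (norm_nonneg _) h1 (by omega)
  rw [← norm_pow, h2] at h3
  simp at h3

lemma qPoch_ne {Q : ℂ} (h1 : ‖Q‖ < 1) (n : ℕ) : qPoch Q Q n ≠ 0 := by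
  rw [qPoch, Finset.prod_ne_zero_iff]
  intro j _
  have := one_sub_pow_ne h1 j
  rwa [pow_succ'] at this

lemma eQ_rec {Q : ℂ} (h1 : ‖Q‖ < 1) (n : ℤ) : (1 - Q ^ n) * eQ Q n = eQ Q (n - 1) := by
  rcases lt_trichotomy n 0 with h | h | h
  · rw [eQ_neg Q h, eQ_neg Q (by omega), mul_zero]
  · subst h
    rw [eQ_neg Q (n := 0 - 1) (by omega)]
    simp
  · obtain ⟨m, rfl⟩ : ∃ m : ℕ, n = ((m + 1 : ℕ) : ℤ) := ⟨(n - 1).toNat, by omega⟩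
    have h2 : ((m + 1 : ℕ) : ℤ) - 1 = (m : ℤ) := by push_cast; ring
    rw [h2, eQ_nat, eQ_nat, zpow_natCast]
    have h3 : qPoch Q Q (m + 1) = qPoch Q Q m * (1 - Q ^ (m + 1)) := by
      rw [qPoch, Finset.prod_range_succ, ← qPoch, pow_succ']
    rw [h3, mul_inv]
    have := one_sub_pow_ne h1 m
    have := qPoch_ne h1 m
    field_simp

lemma eQ_rec_nat {Q : ℂ} (h1 : ‖Q‖ < 1) (n : ℕ) : (1 - Q ^ n) * eQ Q n = eQ Q ((n : ℤ) - 1) := by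
  rw [← eQ_rec h1, zpow_natCast]

/-- shift of the summation index where the term vanishes at zero -/
lemma sum_shift (f : ℕ → ℂ) (N : ℕ) (h : f 0 = 0) :
    ∑ j ∈ Finset.range (N + 1), f j = ∑ j ∈ Finset.range N, f (j + 1) := by
  rw [Finset.sum_range_succ', h, add_zero]

lemma sum_drop (f : ℕ → ℂ) (N : ℕ) (h : f N = 0) :
    ∑ j ∈ Finset.range (N + 1), f j = ∑ j ∈ Finset.range N, f j := by
  rw [Finset.sum_range_succ, h, add_zero]

/-- the q-binomial theorem -/
lemma q_binomial {B : ℂ} (hB0 : B ≠ 0) (hB : ‖B‖ < 1) (z : ℂ) (c : ℕ → ℂ)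
    (hc : ∀ j, c (j + 1) = B ^ j * z * c j) (N : ℕ) :
    ∑ j ∈ Finset.range (N + 1), c j * (eQ B j * eQ B ((N : ℤ) - j)) =
      c 0 * eQ B N * ∏ i ∈ Finset.range N, (1 + z * B ^ i) := by
  induction N with
  | zero => simp [eQ, qPoch]
  | succ N ih =>
    have key : (1 - B ^ (N + 1)) *
        (∑ j ∈ Finset.range (N + 1 + 1), c j * (eQ B j * eQ B (((N + 1 : ℕ) : ℤ) - j))) =
        (1 + z * B ^ N) *
        ∑ j ∈ Finset.range (N + 1), c j * (eQ B j * eQ B ((N : ℤ) - j)) := by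
      have e1 : ∀ j ∈ Finset.range (N + 1 + 1),
          (1 - B ^ (N + 1)) * (c j * (eQ B j * eQ B (((N + 1 : ℕ) : ℤ) - j))) =
          c j * (eQ B j * eQ B ((N : ℤ) - j)) +
          c j * (B ^ ((N : ℤ) + 1 - j) * eQ B ((j : ℤ) - 1) * eQ B ((N : ℤ) + 1 - j)) := by
        intro j _
        have r1 := eQ_rec hB ((N : ℤ) + 1 - j)
        have r2 := eQ_rec_nat hB j
        have r3 : (N : ℤ) + 1 - j - 1 = N - j := by ring
        rw [r3] at r1
        have r4 : B ^ (N + 1) = B ^ ((N : ℤ) + 1 - j) * B ^ j := by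
          rw [← zpow_natCast, ← zpow_natCast, ← zpow_add₀ hB0]
          congr 1
          push_cast; ring
        rw [r4, ← r1, ← r2]
        push_cast
        ring
      rw [Finset.mul_sum, Finset.sum_congr rfl e1, Finset.sum_add_distrib, sum_drop _ (N + 1),
        sum_shift _ (N + 1), ← Finset.sum_add_distrib, Finset.mul_sum]
      · refine Finset.sum_congr rfl fun j _ => ?_
        rw [hc]
        have r5 : B ^ N = B ^ ((N : ℤ) + 1 - (j + 1 : ℕ)) * B ^ j := by
          rw [← zpow_natCast, ← zpow_natCast, ← zpow_add₀ hB0]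
          congr 1
          push_cast; ring
        have r6 : (N : ℤ) + 1 - (j + 1 : ℕ) = N - j := by push_cast; ring
        have r7 : ((j + 1 : ℕ) : ℤ) - 1 = j := by push_cast; ring
        rw [r5, r6, r7]
        ring
      · rw [eQ_neg B (n := ((0 : ℕ) : ℤ) - 1) (by simp)]; ring
      · rw [eQ_neg B (n := (N : ℤ) - (N + 1 : ℕ)) (by push_cast; omega)]; ring
    rw [ih] at key
    have h2 := eQ_rec_nat hB (N + 1)
    have h3 : ((N + 1 : ℕ) : ℤ) - 1 = (N : ℤ) := by push_cast; ring
    rw [h3] at h2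
    rw [← h2] at key
    apply mul_left_cancel₀ (one_sub_pow_ne hB N)
    rw [key, Finset.prod_range_succ]
    ring

/-- limiting case of the q-Vandermonde sum -/
lemma q_vandermonde {Q : ℂ} (hQ0 : Q ≠ 0) (hQ : ‖Q‖ < 1) (n : ℕ) : ∀ c : ℕ,
    ∑ m ∈ Finset.range (n + 1),
      Q ^ (m ^ 2 + c * m) * (eQ Q ((n : ℤ) - m) * eQ Q m * eQ Q ((m : ℤ) + c)) =
      eQ Q n * eQ Q ((n : ℤ) + c) := by
  induction n with
  | zero => intro c; simp [eQ, qPoch]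
  | succ n ih =>
    intro c
    apply mul_left_cancel₀ (one_sub_pow_ne hQ n)
    have h2 := eQ_rec_nat hQ (n + 1)
    have h3 : ((n + 1 : ℕ) : ℤ) - 1 = (n : ℤ) := by push_cast; ring
    rw [h3] at h2
    rw [← mul_assoc (1 - Q ^ (n + 1)), h2]
    have h4 : ((n + 1 : ℕ) : ℤ) + c = (n : ℤ) + (c + 1 : ℕ) := by push_cast; ring
    rw [h4, ← ih (c + 1)]
    have e1 : ∀ m ∈ Finset.range (n + 1 + 1),
        (1 - Q ^ (n + 1)) * (Q ^ (m ^ 2 + c * m) *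
          (eQ Q (((n + 1 : ℕ) : ℤ) - m) * eQ Q m * eQ Q ((m : ℤ) + c))) =
        Q ^ (m ^ 2 + (c + 1) * m) * (eQ Q ((n : ℤ) - m) * eQ Q m * eQ Q ((m : ℤ) + c)) +
        Q ^ (m ^ 2 + c * m) *
          (eQ Q ((n : ℤ) + 1 - m) * eQ Q ((m : ℤ) - 1) * eQ Q ((m : ℤ) + c)) := by
      intro m _
      have r1 := eQ_rec hQ ((n : ℤ) + 1 - m)
      have r2 := eQ_rec_nat hQ m
      have r3 : (n : ℤ) + 1 - m - 1 = n - m := by ring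
      rw [r3] at r1
      have r4 : Q ^ (n + 1) = Q ^ ((n : ℤ) + 1 - m) * Q ^ m := by
        rw [← zpow_natCast, ← zpow_natCast, ← zpow_add₀ hQ0]
        congr 1
        push_cast; ring
      rw [r4, ← r1, ← r2]
      push_cast
      ring
    rw [Finset.mul_sum, Finset.sum_congr rfl e1, Finset.sum_add_distrib, sum_drop _ (n + 1),
      sum_shift _ (n + 1), ← Finset.sum_add_distrib]
    · refine Finset.sum_congr rfl fun m _ => ?_
      have r5 : (n : ℤ) + 1 - (m + 1 : ℕ) = n - m := by push_cast; ring
      have r6 : ((m + 1 : ℕ) : ℤ) - 1 = m := by push_cast; ring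
      have r7 : ((m + 1 : ℕ) : ℤ) + c = ((m + c + 1 : ℕ) : ℤ) := by push_cast; ring
      have r8 : (m : ℤ) + (c + 1 : ℕ) = ((m + c + 1 : ℕ) : ℤ) := by push_cast; ring
      have r9 := eQ_rec_nat hQ (m + c + 1)
      have r10 : ((m + c + 1 : ℕ) : ℤ) - 1 = (m : ℤ) + c := by push_cast; ring
      rw [r10] at r9
      rw [r5, r6, r7, r8, ← r9]
      ring
    · rw [eQ_neg Q (n := ((0 : ℕ) : ℤ) - 1) (by simp)]; ring
    · rw [eQ_neg Q (n := (n : ℤ) - (n + 1 : ℕ)) (by push_cast; omega)]; ring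

/-- the Bailey step for a single index -/
lemma bailey_nat {Q : ℂ} (hQ0 : Q ≠ 0) (hQ : ‖Q‖ < 1) (L r : ℕ) :
    ∑ s ∈ Finset.range (L + 1),
      Q ^ (s ^ 2) * eQ Q ((L : ℤ) - s) * (eQ Q ((s : ℤ) - r) * eQ Q ((s : ℤ) + r)) =
      Q ^ (r ^ 2) * (eQ Q ((L : ℤ) - r) * eQ Q ((L : ℤ) + r)) := by
  by_cases h : L < r
  · rw [eQ_neg Q (n := (L : ℤ) - r) (by omega), Finset.sum_eq_zero]
    · ring
    · intro s hs
      rw [Finset.mem_range] at hs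
      rw [eQ_neg Q (n := (s : ℤ) - r) (by omega)]
      ring
  · obtain ⟨n, rfl⟩ : ∃ n, L = r + n := ⟨L - r, by omega⟩
    rw [add_assoc, Finset.sum_range_add, Finset.sum_eq_zero, zero_add]
    · have h1 : ((r + n : ℕ) : ℤ) - r = n := by push_cast; ring
      have h2 : ((r + n : ℕ) : ℤ) + r = n + (2 * r : ℕ) := by push_cast; ring
      rw [h1, h2, ← q_vandermonde hQ0 hQ n (2 * r), Finset.mul_sum]
      refine Finset.sum_congr rfl fun m _ => ?_
      have h3 : ((r + n : ℕ) : ℤ) - (r + m : ℕ) = n - m := by push_cast; ring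
      have h4 : ((r + m : ℕ) : ℤ) - r = m := by push_cast; ring
      have h5 : ((r + m : ℕ) : ℤ) + r = m + (2 * r : ℕ) := by push_cast; ring
      rw [h3, h4, h5]
      ring
    · intro s hs
      rw [Finset.mem_range] at hs
      rw [eQ_neg Q (n := (s : ℤ) - r) (by omega)]
      ring

lemma bailey_int {Q : ℂ} (hQ0 : Q ≠ 0) (hQ : ‖Q‖ < 1) (L : ℕ) (r : ℤ) :
    ∑ s ∈ Finset.range (L + 1),
      Q ^ (s ^ 2) * eQ Q ((L : ℤ) - s) * (eQ Q ((s : ℤ) - r) * eQ Q ((s : ℤ) + r)) =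
      Q ^ (r ^ 2) * (eQ Q ((L : ℤ) - r) * eQ Q ((L : ℤ) + r)) := by
  obtain ⟨m, rfl | rfl⟩ := r.eq_nat_or_neg
  · rw [bailey_nat hQ0 hQ]
    congr 1
  · have h := bailey_nat hQ0 hQ L m
    have h2 : Q ^ ((-(m : ℤ)) ^ 2) = Q ^ (m ^ 2) := by
      rw [neg_sq]; exact_mod_cast rfl
    rw [h2]
    simp only [sub_neg_eq_add, ← sub_eq_add_neg]
    rw [mul_comm (eQ Q ((L : ℤ) + m)), ← h]
    refine Finset.sum_congr rfl fun s _ => ?_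
    ring

/-- finite Jacobi triple product: the product side -/
lemma prod_aux {p w : ℂ} (hp : p ≠ 0) (hw : w ≠ 0) (L : ℕ) :
    p ^ (L ^ 2) * (w ^ L)⁻¹ *
      ∏ i ∈ Finset.range (2 * L), (1 + w * p ^ (1 - 2 * (L : ℤ)) * (p ^ 2) ^ i) =
    (∏ i ∈ Finset.range L, (1 + p * w * (p ^ 2) ^ i)) *
      ∏ i ∈ Finset.range L, (1 + p * w⁻¹ * (p ^ 2) ^ i) := by
  induction L with
  | zero => simp
  | succ L ih =>
    rw [Finset.prod_range_succ _ L, Finset.prod_range_succ _ L]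
    have h1 : 2 * (L + 1) = 2 * L + 1 + 1 := by ring
    rw [h1, Finset.prod_range_succ, Finset.prod_range_succ']
    have h2 : ∀ i ∈ Finset.range (2 * L),
        (1 + w * p ^ (1 - 2 * ((L + 1 : ℕ) : ℤ)) * (p ^ 2) ^ (i + 1)) =
        (1 + w * p ^ (1 - 2 * (L : ℤ)) * (p ^ 2) ^ i) := by
      intro i _
      have : p ^ (1 - 2 * (L : ℤ)) = p ^ (1 - 2 * ((L + 1 : ℕ) : ℤ)) * p ^ 2 := by
        rw [← zpow_natCast, ← zpow_add₀ hp]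
        congr 1
        push_cast; ring
      rw [this]
      ring
    rw [Finset.prod_congr rfl h2]
    have h3 : p ^ (1 - 2 * ((L + 1 : ℕ) : ℤ)) = (p ^ (2 * L + 1))⁻¹ := by
      rw [← zpow_natCast, ← zpow_neg]
      congr 1
    rw [h3]
    have h4 : (∏ i ∈ Finset.range L, (1 + p * w * (p ^ 2) ^ i)) * (1 + p * w * (p ^ 2) ^ L) *
        ((∏ i ∈ Finset.range L, (1 + p * w⁻¹ * (p ^ 2) ^ i)) * (1 + p * w⁻¹ * (p ^ 2) ^ L)) =
        ((∏ i ∈ Finset.range L, (1 + p * w * (p ^ 2) ^ i)) *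
         (∏ i ∈ Finset.range L, (1 + p * w⁻¹ * (p ^ 2) ^ i))) *
         ((1 + p * w * (p ^ 2) ^ L) * (1 + p * w⁻¹ * (p ^ 2) ^ L)) := by ring
    rw [h4, ← ih]
    generalize (∏ i ∈ Finset.range (2 * L), (1 + w * p ^ (1 - 2 * (L : ℤ)) * (p ^ 2) ^ i)) = X
    field_simp
    ring

/-- a function on the integers supported on `[-L, L]` -/
lemma tsum_window (f : ℤ → ℂ) (L : ℕ) (hf : ∀ r : ℤ, (r < -L ∨ (L : ℤ) < r) → f r = 0) :
    ∑' r, f r = ∑ j ∈ Finset.range (2 * L + 1), f ((j : ℤ) - L) := by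
  rw [tsum_eq_sum (s := (Finset.range (2 * L + 1)).image (fun j : ℕ => (j : ℤ) - L))]
  · rw [Finset.sum_image]
    intro a _ b _ h
    simp only at h
    omega
  · intro r hr
    apply hf
    by_contra hcon
    apply hr
    rw [Finset.mem_image]
    exact ⟨(r + L).toNat, by rw [Finset.mem_range]; omega, by omega⟩

lemma summable_window (f : ℤ → ℂ) (L : ℕ) (hf : ∀ r : ℤ, (r < -L ∨ (L : ℤ) < r) → f r = 0) :
    Summable f := by
  apply summable_of_hasFiniteSupport
  apply (Set.finite_Icc (-(L : ℤ)) L).subset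
  intro r hr
  by_contra hcon
  apply hr
  apply hf
  rw [Set.mem_Icc] at hcon
  omega

lemma eQ_window (Q : ℂ) (L : ℕ) (r : ℤ) (h : r < -L ∨ (L : ℤ) < r) :
    eQ Q ((L : ℤ) - r) * eQ Q ((L : ℤ) + r) = 0 := by
  rcases h with h | h
  · rw [eQ_neg Q (n := (L : ℤ) + r) (by omega), mul_zero]
  · rw [eQ_neg Q (n := (L : ℤ) - r) (by omega), zero_mul]

lemma finite_jtp {p w : ℂ} (hp : p ≠ 0) (hw : w ≠ 0) (hp1 : ‖p‖ < 1) (L : ℕ) :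
    ∑' r : ℤ, p ^ (r ^ 2) * w ^ r * (eQ (p ^ 2) ((L : ℤ) - r) * eQ (p ^ 2) ((L : ℤ) + r)) =
    eQ (p ^ 2) ((2 * L : ℕ) : ℤ) * ((∏ i ∈ Finset.range L, (1 + p * w * (p ^ 2) ^ i)) *
      ∏ i ∈ Finset.range L, (1 + p * w⁻¹ * (p ^ 2) ^ i)) := by
  rw [tsum_window _ L (fun r hr => by rw [eQ_window _ L r hr, mul_zero]), ← prod_aux hp hw]
  have hB : ‖p ^ 2‖ < 1 := by
    rw [norm_pow]; exact pow_lt_one₀ (norm_nonneg _) hp1 (by norm_num)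
  have key := q_binomial (pow_ne_zero 2 hp) hB (w * p ^ (1 - 2 * (L : ℤ)))
    (fun j : ℕ => p ^ (((j : ℤ) - L) ^ 2) * w ^ ((j : ℤ) - L)) (by
      intro j
      have h1 : (((j + 1 : ℕ) : ℤ) - L) ^ 2 = (2 * j : ℕ) + (1 - 2 * (L : ℤ)) + ((j : ℤ) - L) ^ 2 := by
        push_cast; ring
      have h2 : (((j + 1 : ℕ) : ℤ) - L) = 1 + ((j : ℤ) - L) := by push_cast; ring
      rw [h1, h2, zpow_add₀ hp, zpow_add₀ hp, zpow_add₀ hw, zpow_natCast, pow_mul, zpow_one]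
      ring) (2 * L)
  have h3 : p ^ ((((0 : ℕ) : ℤ) - L) ^ 2) * w ^ (((0 : ℕ) : ℤ) - L) = p ^ (L ^ 2) * (w ^ L)⁻¹ := by
    congr 1
    · rw [← zpow_natCast]; congr 1; push_cast; ring
    · rw [← zpow_natCast, ← zpow_neg]; congr 1; push_cast; ring
  simp only [h3] at key
  rw [show ∀ a b c : ℂ, a * (b * c) = b * a * c from fun a b c => by ring, ← key]
  refine Finset.sum_congr rfl fun j _ => ?_
  have h4 : (L : ℤ) - (j - L) = ((2 * L : ℕ) : ℤ) - j := by push_cast; ring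
  have h5 : (L : ℤ) + (j - L) = j := by ring
  rw [h4, h5]
  ring

/-- recurrence for the (base inverted) Rogers-Szego sums -/
lemma rs_rec {q : ℂ} (h0 : q ≠ 0) (h1 : ‖q ^ 2‖ < 1) (K : ℕ → ℂ)
    (hK : ∀ N : ℕ, K N = ∑ j ∈ Finset.range (N + 1), q ^ (-2 * (j : ℤ) * (N - j) - j) *
      (eQ (q ^ 2) j * eQ (q ^ 2) ((N : ℤ) - j))) (N : ℕ) :
    (1 - (q ^ 2) ^ (N + 2)) * K (N + 2) =
      (1 + q⁻¹) * K (N + 1) + q ^ (-2 * (N : ℤ) - 3) * K N := by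
  have hQ0 : q ^ 2 ≠ 0 := pow_ne_zero 2 h0
  have z2 : ∀ n : ℤ, (q ^ 2) ^ n = q ^ (2 * n) := fun n => by
    rw [zpow_mul]; norm_cast
  rw [hK (N + 2)]
  have e1 : ∀ j ∈ Finset.range (N + 2 + 1),
      (1 - (q ^ 2) ^ (N + 2)) * (q ^ (-2 * (j : ℤ) * ((N + 2 : ℕ) - j) - j) *
        (eQ (q ^ 2) j * eQ (q ^ 2) (((N + 2 : ℕ) : ℤ) - j))) =
      q ^ (-2 * (j : ℤ) * ((N + 1 : ℕ) - j) - j) *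
        (eQ (q ^ 2) j * eQ (q ^ 2) (((N + 1 : ℕ) : ℤ) - j)) +
      (q ^ (-2 * (j : ℤ) * ((N + 2 : ℕ) - j) - j + 2 * ((N : ℤ) + 2 - j)) *
        (eQ (q ^ 2) ((j : ℤ) - 1) * eQ (q ^ 2) (((N + 2 : ℕ) : ℤ) - j)) +
      q ^ (-2 * (j : ℤ) * ((N + 2 : ℕ) - j) - j) *
        (eQ (q ^ 2) ((j : ℤ) - 1) * eQ (q ^ 2) (((N + 1 : ℕ) : ℤ) - j))) := by
    intro j _
    have r1 := eQ_rec h1 (((N + 2 : ℕ) : ℤ) - j)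
    have r2 := eQ_rec h1 (j : ℤ)
    have r3 : ((N + 2 : ℕ) : ℤ) - j - 1 = ((N + 1 : ℕ) : ℤ) - j := by push_cast; ring
    rw [r3] at r1
    rw [← r1, ← r2, ← zpow_natCast (q ^ 2), z2, z2, z2]
    have s1 : q ^ (2 * ((N + 2 : ℕ) : ℤ)) = q ^ (2 * (((N + 2 : ℕ) : ℤ) - j)) * q ^ (2 * (j : ℤ)) := by
      rw [← zpow_add₀ h0]; congr 1; ring
    have s2 : q ^ (-2 * (j : ℤ) * ((N + 1 : ℕ) - j) - j) =
        q ^ (-2 * (j : ℤ) * ((N + 2 : ℕ) - j) - j) * q ^ (2 * (j : ℤ)) := by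
      rw [← zpow_add₀ h0]; congr 1; push_cast; ring
    have s3 : q ^ (-2 * (j : ℤ) * ((N + 2 : ℕ) - j) - j + 2 * ((N : ℤ) + 2 - j)) =
        q ^ (-2 * (j : ℤ) * ((N + 2 : ℕ) - j) - j) * q ^ (2 * (((N + 2 : ℕ) : ℤ) - j)) := by
      rw [← zpow_add₀ h0]; congr 1
    rw [s1, s2, s3]
    generalize q ^ (2 * (((N + 2 : ℕ) : ℤ) - j)) = a
    generalize q ^ (2 * (j : ℤ)) = b
    generalize eQ (q ^ 2) (((N + 2 : ℕ) : ℤ) - j) = x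
    ring
  rw [Finset.mul_sum, Finset.sum_congr rfl e1, Finset.sum_add_distrib, Finset.sum_add_distrib,
    sum_drop _ (N + 2), sum_shift _ (N + 2), sum_shift _ (N + 2), hK (N + 1), hK N,
    add_mul, one_mul, add_assoc, Finset.mul_sum, Finset.mul_sum]
  · congr 1
    congr 1
    · refine Finset.sum_congr rfl fun j _ => ?_
      have t1 : ((j + 1 : ℕ) : ℤ) - 1 = j := by push_cast; ring
      have t2 : ((N + 2 : ℕ) : ℤ) - (j + 1 : ℕ) = ((N + 1 : ℕ) : ℤ) - j := by push_cast; ring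
      rw [t1, t2, ← mul_assoc q⁻¹]
      congr 1
      rw [← zpow_neg_one, ← zpow_add₀ h0]
      congr 1
      push_cast; ring
    · rw [show N + 2 = N + 1 + 1 from rfl, sum_drop _ (N + 1) (by
        rw [eQ_neg (q ^ 2) (n := ((N + 1 : ℕ) : ℤ) - (N + 1 + 1 : ℕ)) (by push_cast; omega)]; ring)]
      refine Finset.sum_congr rfl fun j _ => ?_
      have t1 : ((j + 1 : ℕ) : ℤ) - 1 = j := by push_cast; ring
      have t2 : ((N + 1 : ℕ) : ℤ) - (j + 1 : ℕ) = (N : ℤ) - j := by push_cast; ring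
      rw [t1, t2, ← mul_assoc (q ^ (-2 * (N : ℤ) - 3))]
      congr 1
      rw [← zpow_add₀ h0]
      congr 1
      push_cast; ring
  · rw [eQ_neg (q ^ 2) (n := ((0 : ℕ) : ℤ) - 1) (by simp)]; ring
  · rw [eQ_neg (q ^ 2) (n := ((0 : ℕ) : ℤ) - 1) (by simp)]; ring
  · rw [eQ_neg (q ^ 2) (n := ((N + 1 : ℕ) : ℤ) - (N + 2 : ℕ)) (by push_cast; omega)]; ring

lemma rs_closed {q : ℂ} (h0 : q ≠ 0) (h1 : ‖q ^ 2‖ < 1) (K : ℕ → ℂ)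
    (hK : ∀ N : ℕ, K N = ∑ j ∈ Finset.range (N + 1), q ^ (-2 * (j : ℤ) * (N - j) - j) *
      (eQ (q ^ 2) j * eQ (q ^ 2) ((N : ℤ) - j))) (N : ℕ) :
    K N = eQ (q ^ 2) N * ∏ i ∈ Finset.range N, (1 + (q ^ (i + 1))⁻¹) ∧
    K (N + 1) = eQ (q ^ 2) (N + 1 : ℕ) * ∏ i ∈ Finset.range (N + 1), (1 + (q ^ (i + 1))⁻¹) := by
  induction N with
  | zero =>
    have e0 : eQ (q ^ 2) 0 = 1 := by simp [eQ, qPoch]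
    rw [hK, hK]
    constructor
    · simp [e0]
    · rw [Finset.sum_range_succ]
      simp [e0]
      ring
  | succ N ih =>
    refine ⟨ih.2, ?_⟩
    apply mul_left_cancel₀ (one_sub_pow_ne h1 (N + 1))
    rw [show N + 1 + 1 = N + 2 from rfl, rs_rec h0 h1 K hK N, ih.1, ih.2]
    have r1 := eQ_rec_nat h1 (N + 2)
    have r2 := eQ_rec_nat h1 (N + 1)
    rw [show ((N + 2 : ℕ) : ℤ) - 1 = (N + 1 : ℕ) by push_cast; ring] at r1
    rw [show ((N + 1 : ℕ) : ℤ) - 1 = (N : ℕ) by push_cast; ring] at r2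
    rw [← mul_assoc (1 - (q ^ 2) ^ (N + 2)), r1, ← r2, Finset.prod_range_succ _ (N + 1),
      Finset.prod_range_succ _ N]
    have r3 : q ^ (-2 * (N : ℤ) - 3) = (q ^ (2 * N + 3))⁻¹ := by
      rw [← zpow_natCast, ← zpow_neg]
      congr 1
      push_cast; ring
    rw [r3]
    generalize ∏ i ∈ Finset.range N, (1 + (q ^ (i + 1))⁻¹) = X
    generalize eQ (q ^ 2) (N + 1 : ℕ) = Y
    field_simp
    ring

lemma rs_prod {q : ℂ} (h0 : q ≠ 0) (h1 : ‖q‖ < 1) (h2 : ‖q ^ 2‖ < 1) (L : ℕ) :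
    q ^ (2 * L ^ 2 + L) * (eQ (q ^ 2) (2 * L : ℕ) *
      ∏ i ∈ Finset.range (2 * L), (1 + (q ^ (i + 1))⁻¹)) = (qPoch q q (2 * L))⁻¹ := by
  have key : ∀ N : ℕ, qPoch (q ^ 2) (q ^ 2) N =
      qPoch q q N * ∏ i ∈ Finset.range N, (1 + q ^ (i + 1)) := by
    intro N
    rw [qPoch, qPoch, ← Finset.prod_mul_distrib]
    refine Finset.prod_congr rfl fun i _ => ?_
    ring
  have key2 : ∀ L : ℕ, q ^ (2 * L ^ 2 + L) * ∏ i ∈ Finset.range (2 * L), (1 + (q ^ (i + 1))⁻¹) =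
      ∏ i ∈ Finset.range (2 * L), (1 + q ^ (i + 1)) := by
    intro L
    induction L with
    | zero => simp
    | succ L ih =>
      rw [show 2 * (L + 1) = 2 * L + 1 + 1 by ring, Finset.prod_range_succ, Finset.prod_range_succ,
        Finset.prod_range_succ, Finset.prod_range_succ, ← ih]
      generalize ∏ i ∈ Finset.range (2 * L), (1 + (q ^ (i + 1))⁻¹) = X
      field_simp
      ring
  have h3 := qPoch_ne h1 (2 * L)
  have h4 := qPoch_ne h2 (2 * L)
  rw [mul_left_comm, key2, eQ_nat]
  rw [key] at h4 ⊢
  have h5 := right_ne_zero_of_mul h4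
  field_simp

/-- the initial Bailey pair -/
lemma F_zero {q : ℂ} (h0 : q ≠ 0) (h1 : ‖q‖ < 1) (h2 : ‖q ^ 2‖ < 1) (L : ℕ) :
    ∑' r : ℤ, q ^ (2 * r ^ 2 - r) * (eQ (q ^ 2) ((L : ℤ) - r) * eQ (q ^ 2) ((L : ℤ) + r)) =
      (qPoch q q (2 * L))⁻¹ := by
  rw [← rs_prod h0 h1 h2, ← (rs_closed h0 h2 _ (fun N => rfl) (2 * L)).1,
    tsum_window _ L (fun r hr => by rw [eQ_window _ L r hr, mul_zero]), Finset.mul_sum]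
  refine Finset.sum_congr rfl fun j _ => ?_
  have h4 : (L : ℤ) - (j - L) = ((2 * L : ℕ) : ℤ) - j := by push_cast; ring
  have h5 : (L : ℤ) + (j - L) = j := by ring
  rw [h4, h5, ← mul_assoc (q ^ (2 * L ^ 2 + L)), mul_comm (eQ (q ^ 2) j)]
  congr 1
  rw [← zpow_natCast, ← zpow_add₀ h0]
  congr 1
  push_cast; ring

lemma summable_geo_norm {B : ℂ} (hB : ‖B‖ < 1) (x : ℂ) :
    Summable fun j : ℕ => ‖-(x * B ^ j)‖ := by
  simp only [norm_neg, norm_mul, norm_pow]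
  exact (summable_geometric_of_lt_one (norm_nonneg _) hB).mul_left _

lemma qPoch_tendsto {B : ℂ} (hB : ‖B‖ < 1) (x : ℂ) :
    Filter.Tendsto (fun n => qPoch x B n) Filter.atTop (nhds (qPochInf x B)) := by
  have h := (multipliable_one_add_of_summable (summable_geo_norm hB x)).tendsto_prod_tprod_nat
  simp only [← sub_eq_add_neg] at h
  exact h

lemma qPochInf_ne {Q : ℂ} (hQ : ‖Q‖ < 1) : qPochInf Q Q ≠ 0 := by
  have h := tprod_one_add_ne_zero_of_summable (f := fun j : ℕ => -(Q * Q ^ j)) (by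
    intro j
    have := one_sub_pow_ne hQ j
    rwa [pow_succ', sub_eq_add_neg] at this) (summable_geo_norm hQ Q)
  simp only [← sub_eq_add_neg] at h
  exact h

lemma eQ_tendsto_nat {Q : ℂ} (hQ : ‖Q‖ < 1) :
    Filter.Tendsto (fun n : ℕ => eQ Q n) Filter.atTop (nhds (qPochInf Q Q)⁻¹) := by
  simp only [eQ_nat]
  exact (qPoch_tendsto hQ Q).inv₀ (qPochInf_ne hQ)

lemma eQ_tendsto {Q : ℂ} (hQ : ‖Q‖ < 1) (r : ℤ) :
    Filter.Tendsto (fun n : ℕ => eQ Q ((n : ℤ) + r)) Filter.atTop (nhds (qPochInf Q Q)⁻¹) := by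
  have h1 : Filter.Tendsto (fun n : ℕ => ((n : ℤ) + r).toNat) Filter.atTop Filter.atTop := by
    rw [Filter.tendsto_atTop_atTop]
    intro b
    exact ⟨b + r.natAbs, fun a ha => by omega⟩
  refine ((eQ_tendsto_nat hQ).comp h1).congr' ?_
  filter_upwards [Filter.eventually_ge_atTop r.natAbs] with n hn
  simp only [Function.comp]
  congr 1
  omega

lemma eQ_bdd {Q : ℂ} (hQ : ‖Q‖ < 1) : ∃ C : ℝ, 1 ≤ C ∧ ∀ n : ℤ, ‖eQ Q n‖ ≤ C := by
  obtain ⟨C, hC⟩ := (Metric.isBounded_range_of_tendsto _ (eQ_tendsto_nat hQ)).exists_norm_le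
  refine ⟨max C 1, le_max_right _ _, fun n => ?_⟩
  by_cases h : n < 0
  · rw [eQ_neg Q h, norm_zero]
    exact le_trans zero_le_one (le_max_right _ _)
  · obtain ⟨m, rfl⟩ : ∃ m : ℕ, n = m := ⟨n.toNat, by omega⟩
    exact le_trans (hC _ ⟨m, rfl⟩) (le_max_left _ _)

/-- dominated convergence for the bilateral sums -/
lemma bilateral_tendsto {Q : ℂ} (hQ : ‖Q‖ < 1) (a : ℤ → ℂ) (ha : Summable fun r => ‖a r‖) :
    Filter.Tendsto (fun L : ℕ => ∑' r : ℤ, a r * (eQ Q ((L : ℤ) - r) * eQ Q ((L : ℤ) + r)))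
      Filter.atTop (nhds ((∑' r : ℤ, a r) * ((qPochInf Q Q)⁻¹ * (qPochInf Q Q)⁻¹))) := by
  obtain ⟨C, hC1, hC⟩ := eQ_bdd hQ
  rw [← tsum_mul_right]
  apply tendsto_tsum_of_dominated_convergence (bound := fun r => ‖a r‖ * (C * C)) (ha.mul_right _)
  · intro r
    have h1 := eQ_tendsto hQ (-r)
    simp only [← sub_eq_add_neg] at h1
    exact (h1.mul (eQ_tendsto hQ r)).const_mul _
  · refine Filter.Eventually.of_forall fun L r => ?_
    rw [norm_mul, norm_mul]
    have := hC ((L : ℤ) - r)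
    have := hC ((L : ℤ) + r)
    gcongr

lemma summable_theta {x : ℝ} (h0 : 0 < x) (h1 : x < 1) (f : ℤ → ℤ) (hf : ∀ r, |r| ≤ f r) :
    Summable fun r : ℤ => x ^ (f r) := by
  have hg := summable_geometric_of_lt_one h0.le h1
  have hs : Summable fun r : ℤ => x ^ (r.natAbs) := by
    apply Summable.of_nat_of_neg
    · simpa using hg
    · simpa using hg
  refine Summable.of_nonneg_of_le (fun r => (zpow_pos h0 _).le) (fun r => ?_) hs
  rw [← zpow_natCast]
  apply zpow_le_zpow_right_of_le_one₀ h0 h1.le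
  rw [Int.natCast_natAbs]
  exact hf r

/-- Jacobi triple product -/
lemma jtp {p w : ℂ} (hp : p ≠ 0) (hw : w ≠ 0) (hp1 : ‖p‖ < 1)
    (ha : Summable fun r : ℤ => ‖p ^ (r ^ 2) * w ^ r‖) :
    ∑' r : ℤ, p ^ (r ^ 2) * w ^ r =
      qPochInf (p ^ 2) (p ^ 2) * qPochInf (-(p * w)) (p ^ 2) * qPochInf (-(p * w⁻¹)) (p ^ 2) := by
  have hB : ‖p ^ 2‖ < 1 := by
    rw [norm_pow]; exact pow_lt_one₀ (norm_nonneg _) hp1 (by norm_num)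
  have t1 := bilateral_tendsto hB _ ha
  have t2 : Filter.Tendsto (fun L : ℕ => 2 * L) Filter.atTop Filter.atTop :=
    Filter.tendsto_id.const_mul_atTop' (by norm_num)
  have t3 := ((eQ_tendsto_nat hB).comp t2).mul
    ((qPoch_tendsto hB (-(p * w))).mul (qPoch_tendsto hB (-(p * w⁻¹))))
  have h := tendsto_nhds_unique t1 (t3.congr fun L => by
    rw [finite_jtp hp hw hp1 L]
    simp only [Function.comp, qPoch, neg_mul, sub_neg_eq_add])
  have hne := qPochInf_ne hB
  generalize (∑' r : ℤ, p ^ (r ^ 2) * w ^ r) = X at *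
  field_simp at h
  rw [h]
  ring

/-- The nested sums. -/
noncomputable def SQ (q : ℂ) : ℕ → ℕ → ℂ
  | 0, L => (qPoch q q (2 * L))⁻¹
  | n + 1, L => ∑ s ∈ Finset.range (L + 1), (q ^ 2) ^ (s ^ 2) * eQ (q ^ 2) ((L : ℤ) - s) * SQ q n s

lemma SQ_eq {q : ℂ} (h0 : q ≠ 0) (h1 : ‖q‖ < 1) (n : ℕ) : ∀ L : ℕ,
    SQ q n L = ∑' r : ℤ, q ^ (2 * (n + 1) * r ^ 2 - r) *
      (eQ (q ^ 2) ((L : ℤ) - r) * eQ (q ^ 2) ((L : ℤ) + r)) := by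
  have h2 : ‖q ^ 2‖ < 1 := by
    rw [norm_pow]; exact pow_lt_one₀ (norm_nonneg _) h1 (by norm_num)
  have z2 : ∀ n : ℤ, (q ^ 2) ^ n = q ^ (2 * n) := fun n => by
    rw [zpow_mul]; norm_cast
  induction n with
  | zero => intro L; rw [SQ, ← F_zero h0 h1 h2]; simp
  | succ n ih =>
    intro L
    rw [SQ]
    simp only [ih, ← tsum_mul_left]
    rw [← Summable.tsum_finsetSum]
    · refine tsum_congr fun r => ?_
      have hb := bailey_int (pow_ne_zero 2 h0) h2 L r
      have s1 : q ^ (2 * (((n + 1 : ℕ) : ℤ) + 1) * r ^ 2 - r) =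
          q ^ (2 * ((n : ℤ) + 1) * r ^ 2 - r) * (q ^ 2) ^ (r ^ 2) := by
        rw [z2, ← zpow_add₀ h0]
        congr 1
        push_cast; ring
      rw [s1, mul_assoc (q ^ (2 * ((n : ℤ) + 1) * r ^ 2 - r)), ← hb, Finset.mul_sum]
      refine Finset.sum_congr rfl fun s _ => ?_
      ring
    · intro s _
      apply summable_window _ s
      intro r hr
      rw [eQ_window _ s r hr]
      ring

/-- The summand of the nested sums. -/
noncomputable def TQ (q : ℂ) : (n : ℕ) → ℕ → (Fin n → ℕ) → ℂ
  | 0, L, _ => (qPoch q q (2 * L))⁻¹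
  | n + 1, L, s => (q ^ 2) ^ (s 0 ^ 2) * eQ (q ^ 2) ((L : ℤ) - s 0) * TQ q n (s 0) (Fin.tail s)

lemma TQ_explicit (q : ℂ) (n : ℕ) : ∀ u : ℕ → ℕ,
    TQ q n (u 0) (fun i => u (i + 1)) =
      (q ^ 2) ^ (∑ m ∈ Finset.range n, u (m + 1) ^ 2) *
        (∏ m ∈ Finset.range n, eQ (q ^ 2) ((u m : ℤ) - u (m + 1))) * (qPoch q q (2 * u n))⁻¹ := by
  induction n with
  | zero => intro u; simp [TQ]
  | succ n ih =>
    intro u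
    have h := ih (fun m => u (m + 1))
    rw [TQ]
    have ht : (Fin.tail fun i : Fin (n + 1) => u (i + 1)) = fun i : Fin n => u (i + 1 + 1) := by
      funext i
      simp [Fin.tail]
    rw [ht]
    simp only [Fin.val_zero, zero_add] at h ⊢
    rw [h, Finset.sum_range_succ', Finset.prod_range_succ', pow_add]
    simp only [zero_add]
    ring

lemma summable_pi {x : ℝ} (h0 : 0 ≤ x) (h1 : x < 1) (n : ℕ) :
    Summable fun s : Fin n → ℕ => ∏ i, x ^ (s i) := by
  induction n with
  | zero => exact Summable.of_finite
  | succ n ih =>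
    rw [← (Fin.consEquiv (fun _ : Fin (n + 1) => ℕ)).summable_iff]
    have h := (summable_geometric_of_lt_one h0 h1).mul_of_nonneg ih
      (fun i => pow_nonneg h0 i) (fun s => Finset.prod_nonneg fun i _ => pow_nonneg h0 _)
    refine h.congr fun s => ?_
    simp [Fin.consEquiv, Fin.prod_univ_succ]

lemma TQ_bound {q : ℂ} (h1 : ‖q‖ < 1) {C : ℝ} (hC1 : 1 ≤ C)
    (hC : ∀ n, ‖eQ (q ^ 2) n‖ ≤ C) (hC' : ∀ n : ℤ, ‖eQ q n‖ ≤ C) (n : ℕ) :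
    ∀ (L : ℕ) (s : Fin n → ℕ), ‖TQ q n L s‖ ≤ C ^ (n + 1) * ∏ i, ‖q‖ ^ (s i) := by
  induction n with
  | zero =>
    intro L s
    have := hC' ((2 * L : ℕ) : ℤ)
    rw [eQ_nat] at this
    simpa [TQ] using this
  | succ n ih =>
    intro L s
    rw [TQ, norm_mul, norm_mul, norm_pow, norm_pow, Fin.prod_univ_succ]
    have b1 : (‖q‖ ^ 2) ^ (s 0 ^ 2) ≤ ‖q‖ ^ (s 0) := by
      rw [← pow_mul]
      apply pow_le_pow_of_le_one (norm_nonneg _) h1.le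
      nlinarith [Nat.zero_le (s 0)]
    have b2 := hC ((L : ℤ) - s 0)
    have b3 := ih (s 0) (Fin.tail s)
    calc _ ≤ ‖q‖ ^ (s 0) * C * (C ^ (n + 1) * ∏ i, ‖q‖ ^ (Fin.tail s i)) := by gcongr
      _ = _ := by
        simp only [Fin.tail]
        ring

lemma both_bdd {q : ℂ} (h1 : ‖q‖ < 1) (h2 : ‖q ^ 2‖ < 1) : ∃ C : ℝ, 1 ≤ C ∧
    (∀ n, ‖eQ (q ^ 2) n‖ ≤ C) ∧ (∀ n : ℤ, ‖eQ q n‖ ≤ C) := by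
  obtain ⟨C, a, b⟩ := eQ_bdd h1
  obtain ⟨D, c, d⟩ := eQ_bdd h2
  exact ⟨max C D, le_trans a (le_max_left _ _), fun n => le_trans (d n) (le_max_right _ _),
    fun n => le_trans (b n) (le_max_left _ _)⟩

lemma TQ_summable {q : ℂ} (h1 : ‖q‖ < 1) (h2 : ‖q ^ 2‖ < 1) (n L : ℕ) :
    Summable (TQ q n L) := by
  obtain ⟨C, hC1, hC, hC'⟩ := both_bdd h1 h2
  exact Summable.of_norm_bounded ((summable_pi (norm_nonneg q) h1 n).mul_left (C ^ (n + 1)))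
    (TQ_bound h1 hC1 hC hC' n L)

lemma SQ_tsum {q : ℂ} (h1 : ‖q‖ < 1) (h2 : ‖q ^ 2‖ < 1) (n : ℕ) : ∀ L : ℕ,
    ∑' s, TQ q n L s = SQ q n L := by
  induction n with
  | zero => intro L; rw [SQ]; simp [TQ]
  | succ n ih =>
    intro L
    have hs := TQ_summable h1 h2 (n + 1) L
    rw [← (Fin.consEquiv (fun _ : Fin (n + 1) => ℕ)).summable_iff] at hs
    simp only [Function.comp_def] at hs
    rw [← (Fin.consEquiv (fun _ : Fin (n + 1) => ℕ)).tsum_eq, hs.tsum_prod, SQ]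
    have hin : ∀ s : ℕ, ∑' t : Fin n → ℕ,
        TQ q (n + 1) L ((Fin.consEquiv (fun _ : Fin (n + 1) => ℕ)) (s, t)) =
        (q ^ 2) ^ (s ^ 2) * eQ (q ^ 2) ((L : ℤ) - s) * SQ q n s := by
      intro s
      rw [← ih, ← tsum_mul_left]
      refine tsum_congr fun t => ?_
      simp [TQ, Fin.consEquiv]
    simp only [hin]
    apply tsum_eq_sum
    intro s hs
    rw [Finset.mem_range] at hs
    rw [eQ_neg (q ^ 2) (n := (L : ℤ) - s) (by omega)]
    ring

/-- The summand of the full multisum. -/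
noncomputable def UQ (q : ℂ) (n : ℕ) (s : Fin (n + 1) → ℕ) : ℂ :=
  (q ^ 2) ^ (s 0 ^ 2) * TQ q n (s 0) (Fin.tail s)

lemma UQ_tsum {q : ℂ} (h0 : q ≠ 0) (h1 : ‖q‖ < 1) (n : ℕ) :
    ∑' s, UQ q n s = (∑' r : ℤ, q ^ (2 * (n + 2) * r ^ 2 - r)) / qPochInf (q ^ 2) (q ^ 2) := by
  have h2 : ‖q ^ 2‖ < 1 := by
    rw [norm_pow]; exact pow_lt_one₀ (norm_nonneg _) h1 (by norm_num)
  obtain ⟨C, hC1, hC, hC'⟩ := both_bdd h1 h2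
  have t1 : Filter.Tendsto (fun L : ℕ => ∑' s, TQ q (n + 1) L s) Filter.atTop
      (nhds (∑' s, (qPochInf (q ^ 2) (q ^ 2))⁻¹ * UQ q n s)) := by
    apply tendsto_tsum_of_dominated_convergence
      ((summable_pi (norm_nonneg q) h1 (n + 1)).mul_left (C ^ (n + 1 + 1)))
    · intro s
      have h := eQ_tendsto h2 (-(s 0 : ℤ))
      simp only [← sub_eq_add_neg] at h
      refine (h.mul_const (UQ q n s)).congr fun L => ?_
      rw [TQ, UQ]
      ring
    · exact Filter.Eventually.of_forall fun L s => TQ_bound h1 hC1 hC hC' (n + 1) L s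
  have t2 := bilateral_tendsto h2 (fun r : ℤ => q ^ (2 * ((n + 1 : ℕ) + 1) * r ^ 2 - r)) (by
    simp only [norm_zpow]
    apply summable_theta (norm_pos_iff.mpr h0) h1
    intro r
    push_cast
    have : |r| ≤ r ^ 2 := by rw [← sq_abs]; nlinarith [abs_nonneg r, Int.le_self_sq |r|]
    have : r ≤ |r| := le_abs_self r
    nlinarith [sq_nonneg r])
  have t3 := tendsto_nhds_unique t1 (t2.congr fun L => by rw [SQ_tsum h1 h2, SQ_eq h0 h1])
  rw [tsum_mul_left] at t3
  have hne := qPochInf_ne h2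
  have e : ∀ r : ℤ, 2 * (((n + 1 : ℕ) : ℤ) + 1) * r ^ 2 - r = 2 * ((n : ℤ) + 2) * r ^ 2 - r := by
    intro r; push_cast; ring
  simp only [e] at t3
  generalize (∑' r : ℤ, q ^ (2 * ((n : ℤ) + 2) * r ^ 2 - r)) = X at *
  generalize ∑' s, UQ q n s = Y at *
  field_simp at t3 ⊢
  rw [← t3]

lemma UQ_explicit (q : ℂ) (n : ℕ) (t : ℕ → ℕ) :
    UQ q n (fun i => t i) = (q ^ 2) ^ (∑ m ∈ Finset.range (n + 1), t m ^ 2) *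
        (∏ m ∈ Finset.range n, eQ (q ^ 2) ((t m : ℤ) - t (m + 1))) * (qPoch q q (2 * t n))⁻¹ := by
  have h := TQ_explicit q n t
  have ht : (Fin.tail fun i : Fin (n + 1) => t i) = fun i : Fin n => t (i + 1) := by
    funext i
    simp [Fin.tail]
  rw [UQ, ht]
  simp only [Fin.val_zero]
  rw [h, Finset.sum_range_succ', pow_add]
  ring

/-- extension of a tuple by zero -/
def extT (n : ℕ) (s : Fin n → ℕ) (m : ℕ) : ℕ := if h : m < n then s ⟨m, h⟩ else 0

lemma extT_fin {n : ℕ} (s : Fin n → ℕ) : (fun i : Fin n => extT n s i) = s := by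
  funext i
  simp [extT]

lemma UQ_zero (q : ℂ) (n : ℕ) (s : Fin (n + 1) → ℕ) (hs : ¬ Antitone s) : UQ q n s = 0 := by
  rw [Fin.antitone_iff_succ_le] at hs
  push Not at hs
  obtain ⟨i, hi⟩ := hs
  rw [← extT_fin s, UQ_explicit]
  rw [Finset.prod_eq_zero (Finset.mem_range.mpr i.2)]
  · ring
  · apply eQ_neg
    have a1 : extT (n + 1) s i = s i.castSucc := by
      simp [extT, Nat.lt_succ_of_lt i.2, Fin.castSucc, Fin.castAdd, Fin.castLE]
    have a2 : extT (n + 1) s (i + 1) = s i.succ := by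
      simp [extT, Fin.succ]
    rw [a1, a2]
    omega

lemma UQ_antitone (q : ℂ) (n : ℕ) (s : Fin (n + 1) → ℕ) (hs : Antitone s) :
    UQ q n s = q ^ (2 * ∑ m ∈ Finset.range (n + 1), (extT (n + 1) s m) ^ 2) /
         ((∏ m ∈ Finset.range n, qPoch (q ^ 2) (q ^ 2) (extT (n + 1) s m - extT (n + 1) s (m + 1))) *
           qPoch q q (2 * extT (n + 1) s n)) := by
  conv_lhs => rw [← extT_fin s]
  rw [UQ_explicit, ← pow_mul, div_eq_mul_inv, mul_inv, ← Finset.prod_inv_distrib, mul_assoc]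
  congr 2
  refine Finset.prod_congr rfl fun m hm => ?_
  rw [Finset.mem_range] at hm
  have h : extT (n + 1) s (m + 1) ≤ extT (n + 1) s m := by
    rw [extT, extT, dif_pos (by omega), dif_pos (by omega)]
    apply hs
    simp
  rw [← eQ_nat, Nat.cast_sub h]

lemma main_aux (q : ℂ) (h0 : 0 < ‖q‖) (h1 : ‖q‖ < 1) (n : ℕ) :
    (∑' s : {s : Fin (n + 1) → ℕ // Antitone s},
      (q ^ (2 * ∑ m ∈ Finset.range (n + 1), (extT (n + 1) s.1 m) ^ 2) /
         ((∏ m ∈ Finset.range n,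
            qPoch (q ^ 2) (q ^ 2) (extT (n + 1) s.1 m - extT (n + 1) s.1 (m + 1))) *
           qPoch q q (2 * extT (n + 1) s.1 n)))) =
      qPochInf (q ^ (4 * (n + 2))) (q ^ (4 * (n + 2))) *
        qPochInf (-(q ^ (2 * (n + 2) - 1))) (q ^ (4 * (n + 2))) *
        qPochInf (-(q ^ (2 * (n + 2) + 1))) (q ^ (4 * (n + 2))) / qPochInf (q ^ 2) (q ^ 2) := by
  have hq : q ≠ 0 := norm_pos_iff.mp h0
  have e1 : (∑' s : {s : Fin (n + 1) → ℕ // Antitone s}, UQ q n s.1) = ∑' s, UQ q n s := by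
    apply tsum_subtype_eq_of_support_subset (s := {s : Fin (n + 1) → ℕ | Antitone s})
    intro s hs
    by_contra hcon
    exact hs (UQ_zero q n s hcon)
  rw [tsum_congr fun s : {s : Fin (n + 1) → ℕ // Antitone s} => (UQ_antitone q n s.1 s.2).symm, e1,
    UQ_tsum hq h1]
  congr 1
  have z : ∀ r : ℤ, q ^ (2 * ((n : ℤ) + 2) * r ^ 2 - r) =
      (q ^ (2 * (n + 2))) ^ (r ^ 2) * q⁻¹ ^ r := by
    intro r
    rw [← zpow_natCast, ← zpow_mul, ← zpow_neg_one, ← zpow_mul, ← zpow_add₀ hq]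
    congr 1
    push_cast; ring
  have hp1 : ‖q ^ (2 * (n + 2))‖ < 1 := by
    rw [norm_pow]; exact pow_lt_one₀ (norm_nonneg _) h1 (by omega)
  have j := jtp (pow_ne_zero (2 * (n + 2)) hq) (inv_ne_zero hq) hp1 (by
    simp only [← z, norm_zpow]
    apply summable_theta h0 h1
    intro r
    have : |r| ≤ r ^ 2 := by rw [← sq_abs]; nlinarith [abs_nonneg r, Int.le_self_sq |r|]
    have : r ≤ |r| := le_abs_self r
    nlinarith [sq_nonneg r])
  simp only [← z] at j
  have f1 : (q ^ (2 * (n + 2))) ^ 2 = q ^ (4 * (n + 2)) := by ring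
  have f2 : q ^ (2 * (n + 2)) * q⁻¹ = q ^ (2 * (n + 2) - 1) := by
    rw [show 2 * (n + 2) = 2 * (n + 2) - 1 + 1 by omega, pow_succ]
    simp [hq]
  have f3 : q ^ (2 * (n + 2)) * q⁻¹⁻¹ = q ^ (2 * (n + 2) + 1) := by
    rw [inv_inv, pow_succ]
  rw [j, f1, f2, f3]

/-- Identity (4.1) (with `q` replaced by `q²`).  The tuple `s` encodes
`s_1 ≥ s_2 ≥ ⋯ ≥ s_{k-1} ≥ 0` via `s_m = t (m-1)`. -/
theorem identity_4_1 (q : ℂ) (h0 : 0 < ‖q‖) (h1 : ‖q‖ < 1)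
    (k : ℕ) (hk : 2 ≤ k) :
    (∑' s : {s : Fin (k - 1) → ℕ // Antitone s},
      (let t : ℕ → ℕ := fun m => if h : m < k - 1 then s.1 ⟨m, h⟩ else 0
       q ^ (2 * ∑ m ∈ Finset.range (k - 1), (t m) ^ 2) /
         ((∏ m ∈ Finset.range (k - 2), qPoch (q ^ 2) (q ^ 2) (t m - t (m + 1))) *
           qPoch q q (2 * t (k - 2))))) =
      qPochInf (q ^ (4 * k)) (q ^ (4 * k)) * qPochInf (-(q ^ (2 * k - 1))) (q ^ (4 * k)) *
        qPochInf (-(q ^ (2 * k + 1))) (q ^ (4 * k)) / qPochInf (q ^ 2) (q ^ 2) := by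
  obtain ⟨n, rfl⟩ : ∃ n, k = n + 2 := ⟨k - 2, by omega⟩
  exact main_aux q h0 h1 n
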